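/- Let G be an infinite discrete group. Then every minimal G-flow has the separated covering property: for every finite D ⊆ G and every nonempty open U ⊆ X there exists a D-separated S ⊆ G with S⁻¹U = X. -/

import Mathlib

open Pointwise

section Defs

variable (G : Type*) [Group G]

/-- The right-shift of `G` on `G → A`: `(g • z) h = z (h * g)`. -/
instance (priority := high) shiftSMul (A : Type*) : SMul G (G → A) :=
  ⟨fun g z h => z (h * g)⟩

/-- The right-shift action of `G` on `G → A` is a `G`-action (the Bernoulli flow when
`A = Bool`). -/
instance shiftMulAction (A : Type*) : MulAction G (G → A) where
  one_smul z := funext fun h => by show z (h * 1) = z h; rw [mul_one]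
  mul_smul g₁ g₂ z := funext fun h => by
    show z (h * (g₁ * g₂)) = z (h * g₁ * g₂)
    rw [mul_assoc]

/-- `S ⊆ G` is `D`-separated if `Dg ∩ Dh = ∅` for all distinct `g, h ∈ S`. -/
def DSeparated (D S : Set G) : Prop :=
  ∀ g ∈ S, ∀ h ∈ S, g ≠ h → Disjoint (D * ({g} : Set G)) (D * ({h} : Set G))

/-- The separated covering property for a `G`-flow `X`: for every finite `D ⊆ G`
and every nonempty open `U ⊆ X` there is a `D`-separated `S ⊆ G` with `S⁻¹U = X`. -/
def SCP (X : Type*) [TopologicalSpace X] [MulAction G X] : Prop :=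
  ∀ D : Set G, D.Finite → ∀ U : Set X, IsOpen U → U.Nonempty →
    ∃ S : Set G, DSeparated G D S ∧ ∀ x : X, ∃ s ∈ S, s • x ∈ U

/-- A `G`-flow is minimal if every orbit is dense. -/
def IsMinimalFlow (X : Type*) [TopologicalSpace X] [MulAction G X] : Prop :=
  ∀ x : X, Dense (MulAction.orbit G x)

/-- Two `G`-flows `X` and `Y` are disjoint if the only closed `G`-invariant subset of
`X × Y` projecting onto both factors is `X × Y` itself. -/
def FlowsDisjoint (X Y : Type*) [TopologicalSpace X] [TopologicalSpace Y]
    [MulAction G X] [MulAction G Y] : Prop :=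
  ∀ J : Set (X × Y), IsClosed J → (∀ (g : G), ∀ p ∈ J, g • p ∈ J) →
    Prod.fst '' J = Set.univ → Prod.snd '' J = Set.univ → J = Set.univ

end Defs

/-!
Fix a point `x₀` and let `V` be the set of `g` with `g • x₀ ∈ U`; by minimality and compactness
finitely many translates of `V` cover `G`, so `V` is infinite. Put `E = D⁻¹D ∪ {1}` and choose a
large finite `E`-separated `F ⊆ V`. Since `F • x₀ ⊆ U`, minimality and compactness again give a
finite `K` such that every `x` has some `k ∈ K` with `F • (k • x) ⊆ U`. It remains to find a
`D`-separated `S` meeting `F k` for every `k ∈ K`.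

Take a uniformly random subset of `G` and let `S` consist of those of its elements `g` that are
alone in `E g`; such an `S` is always `D`-separated. For a fixed `k`, the sets `E f k` (`f ∈ F`) are
disjoint, so `S` misses `F k` with probability `(1 - 2 ^ (-|E|)) ^ |F|`. This event depends only on
the coins in `E F k`, which meets at most `(|E| |F|) ^ 2` of the sets `E F k'`. As exponential decay
in `|F|` beats the quadratic growth, the Lovász local lemma applies.
-/

open MeasureTheory ProbabilityTheory

section LocalLemma

variable {Ω ι V : Type*} {mΩ : MeasurableSpace Ω} {μ : Measure Ω} {A : ι → Set Ω}
  {N : ι → Finset ι} {p : ℝ} {d : ℕ}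

lemma measureReal_biInter_compl_le_add_sum [DecidableEq ι] [IsFiniteMeasure μ] (A : ι → Set Ω)
    (T' T : Finset ι) :
    μ.real (⋂ j ∈ T', (A j)ᶜ) ≤
      μ.real (⋂ j ∈ T, (A j)ᶜ) + ∑ l ∈ T \ T', μ.real (A l ∩ ⋂ j ∈ T', (A j)ᶜ) := by
  have hcover : (⋂ j ∈ T', (A j)ᶜ) ⊆
      (⋂ j ∈ T, (A j)ᶜ) ∪ ⋃ l ∈ T \ T', A l ∩ ⋂ j ∈ T', (A j)ᶜ := by
    intro ω hω
    by_cases hT : ω ∈ ⋂ j ∈ T, (A j)ᶜ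
    · exact Or.inl hT
    · simp only [Set.mem_iInter, Set.mem_compl_iff, not_forall, not_not] at hT
      obtain ⟨l, hlT, hl⟩ := hT
      have hlT' : l ∉ T' := fun h => Set.mem_iInter₂.mp hω l h hl
      exact Or.inr (Set.mem_biUnion (Finset.mem_sdiff.mpr ⟨hlT, hlT'⟩) ⟨hl, hω⟩)
  calc μ.real (⋂ j ∈ T', (A j)ᶜ)
      ≤ μ.real ((⋂ j ∈ T, (A j)ᶜ) ∪ ⋃ l ∈ T \ T', A l ∩ ⋂ j ∈ T', (A j)ᶜ) :=
        measureReal_mono hcover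
    _ ≤ _ := (measureReal_union_le _ _).trans
        (add_le_add_right (measureReal_biUnion_finset_le _ _) _)

lemma nonneg_of_conditional_bound [IsProbabilityMeasure μ]
    (hA : ∀ i (T : Finset ι), Disjoint T (N i) →
      μ.real (A i ∩ ⋂ j ∈ T, (A j)ᶜ) ≤ p * μ.real (⋂ j ∈ T, (A j)ᶜ)) (i : ι) : 0 ≤ p := by
  simpa using measureReal_nonneg.trans (hA i ∅ (Finset.disjoint_empty_left _))

lemma measureReal_inter_biInter_compl_le [IsProbabilityMeasure μ] (hN : ∀ i, (N i).card ≤ d)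
    (hdp : 4 * d * p ≤ 1)
    (hA : ∀ i (T : Finset ι), Disjoint T (N i) →
      μ.real (A i ∩ ⋂ j ∈ T, (A j)ᶜ) ≤ p * μ.real (⋂ j ∈ T, (A j)ᶜ))
    (T : Finset ι) (i : ι) :
    μ.real (A i ∩ ⋂ j ∈ T, (A j)ᶜ) ≤ 2 * p * μ.real (⋂ j ∈ T, (A j)ᶜ) := by
  classical
  have hp0 : 0 ≤ p := nonneg_of_conditional_bound hA i
  induction T using Finset.strongInduction generalizing i with
  | H T ih =>
  set T' := T \ N i with hT'
  have hsub : T' ⊆ T := Finset.sdiff_subset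
  have hsum : ∑ l ∈ T \ T', μ.real (A l ∩ ⋂ j ∈ T', (A j)ᶜ) ≤
      1 / 2 * μ.real (⋂ j ∈ T', (A j)ᶜ) := by
    have hterm : ∀ l ∈ T \ T', μ.real (A l ∩ ⋂ j ∈ T', (A j)ᶜ) ≤
        2 * p * μ.real (⋂ j ∈ T', (A j)ᶜ) := fun l hl =>
      ih T' (hsub.ssubset_of_ne fun h => by simp [h] at hl) l
    have hcard : ((T \ T').card : ℝ) ≤ d := by
      rw [hT', sdiff_sdiff_right_self]
      exact_mod_cast (Finset.card_le_card Finset.inter_subset_right).trans (hN i)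
    calc ∑ l ∈ T \ T', μ.real (A l ∩ ⋂ j ∈ T', (A j)ᶜ)
        ≤ (T \ T').card * (2 * p * μ.real (⋂ j ∈ T', (A j)ᶜ)) := by
          simpa only [nsmul_eq_mul] using Finset.sum_le_card_nsmul _ _ _ hterm
      _ ≤ d * (2 * p * μ.real (⋂ j ∈ T', (A j)ᶜ)) := by gcongr
      _ = 4 * d * p * (1 / 2 * μ.real (⋂ j ∈ T', (A j)ᶜ)) := by ring
      _ ≤ 1 / 2 * μ.real (⋂ j ∈ T', (A j)ᶜ) := mul_le_of_le_one_left (by positivity) hdp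
  have hhalf : μ.real (⋂ j ∈ T', (A j)ᶜ) ≤ 2 * μ.real (⋂ j ∈ T, (A j)ᶜ) := by
    linarith [measureReal_biInter_compl_le_add_sum (μ := μ) A T' T]
  calc μ.real (A i ∩ ⋂ j ∈ T, (A j)ᶜ)
      ≤ μ.real (A i ∩ ⋂ j ∈ T', (A j)ᶜ) :=
        measureReal_mono (Set.inter_subset_inter_right _ (Set.biInter_mono hsub fun _ _ => le_rfl))
    _ ≤ p * μ.real (⋂ j ∈ T', (A j)ᶜ) := hA i T' Finset.sdiff_disjoint
    _ ≤ p * (2 * μ.real (⋂ j ∈ T, (A j)ᶜ)) := by gcongr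
    _ = 2 * p * μ.real (⋂ j ∈ T, (A j)ᶜ) := by ring

theorem lovasz_local_lemma_of_conditional_bound [IsProbabilityMeasure μ]
    (hN : ∀ i, (N i).card ≤ d) (hd : d ≠ 0) (hdp : 4 * d * p ≤ 1)
    (hA : ∀ i (T : Finset ι), Disjoint T (N i) →
      μ.real (A i ∩ ⋂ j ∈ T, (A j)ᶜ) ≤ p * μ.real (⋂ j ∈ T, (A j)ᶜ))
    (T : Finset ι) : 0 < μ.real (⋂ j ∈ T, (A j)ᶜ) := by
  classical
  induction T using Finset.induction_on with
  | empty => simp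
  | insert i T hi ih =>
    have hp : 2 * p < 1 := by
      have hd1 : (1 : ℝ) ≤ d := by exact_mod_cast Nat.one_le_iff_ne_zero.mpr hd
      nlinarith [nonneg_of_conditional_bound hA i]
    have hunion := measureReal_biInter_compl_le_add_sum (μ := μ) A T (insert i T)
    rw [Finset.insert_sdiff_of_notMem _ hi, Finset.sdiff_self, insert_empty_eq,
      Finset.sum_singleton] at hunion
    have hcond := measureReal_inter_biInter_compl_le hN hdp hA T i
    nlinarith

variable {m : V → MeasurableSpace Ω} {Y : ι → Set V}

lemma measurableSet_biInter_of_iSup {T : Finset ι}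
    (hA : ∀ i ∈ T, MeasurableSet[⨆ v ∈ Y i, m v] (A i)) :
    MeasurableSet[⨆ v ∈ ⋃ i ∈ T, Y i, m v] (⋂ i ∈ T, A i) :=
  @Finset.measurableSet_biInter _ _ (⨆ v ∈ ⋃ i ∈ T, Y i, m v) _ T fun i hi =>
    (biSup_mono fun _ hv => Set.mem_biUnion hi hv :
      ⨆ v ∈ Y i, m v ≤ ⨆ v ∈ ⋃ i ∈ T, Y i, m v) _ (hA i hi)

lemma measureReal_inter_biInter_eq_mul (hm : ∀ v, m v ≤ mΩ) (hindep : iIndep m μ) {i : ι}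
    {T : Finset ι} {B : Set Ω} (hB : MeasurableSet[⨆ v ∈ Y i, m v] B)
    (hA : ∀ j ∈ T, MeasurableSet[⨆ v ∈ Y j, m v] (A j)) (hY : ∀ j ∈ T, Disjoint (Y i) (Y j)) :
    μ.real (B ∩ ⋂ j ∈ T, A j) = μ.real B * μ.real (⋂ j ∈ T, A j) := by
  have h := (Indep_iff _ _ μ).mp
    (indep_iSup_of_disjoint hm hindep (Set.disjoint_iUnion₂_right.mpr hY)) B _ hB
    (measurableSet_biInter_of_iSup hA)
  rw [measureReal_def, h, ENNReal.toReal_mul, measureReal_def, measureReal_def]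

lemma measureReal_biInter_eq_prod [IsProbabilityMeasure μ] (hm : ∀ v, m v ≤ mΩ)
    (hindep : iIndep m μ) (T : Finset ι) (hA : ∀ i ∈ T, MeasurableSet[⨆ v ∈ Y i, m v] (A i))
    (hY : (T : Set ι).PairwiseDisjoint Y) :
    μ.real (⋂ i ∈ T, A i) = ∏ i ∈ T, μ.real (A i) := by
  classical
  induction T using Finset.induction_on with
  | empty => simp
  | insert i T hi ih =>
    rw [Finset.forall_mem_insert] at hA
    rw [Finset.coe_insert, Set.pairwiseDisjoint_insert_of_notMem (by exact_mod_cast hi)] at hY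
    rw [Finset.set_biInter_insert, Finset.prod_insert hi,
      measureReal_inter_biInter_eq_mul hm hindep hA.1 hA.2 hY.2, ih hA.2 hY.1]

theorem lovasz_local_lemma [IsProbabilityMeasure μ] (hm : ∀ v, m v ≤ mΩ) (hindep : iIndep m μ)
    (hA : ∀ i, MeasurableSet[⨆ v ∈ Y i, m v] (A i)) (hp : ∀ i, μ.real (A i) ≤ p)
    (hY : ∀ i j, ¬Disjoint (Y i) (Y j) → j ∈ N i) (hN : ∀ i, (N i).card ≤ d) (hd : d ≠ 0)
    (hdp : 4 * d * p ≤ 1) (T : Finset ι) :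
    0 < μ.real (⋂ j ∈ T, (A j)ᶜ) := by
  refine lovasz_local_lemma_of_conditional_bound hN hd hdp (fun i T hT => ?_) T
  have hdisj : ∀ j ∈ T, Disjoint (Y i) (Y j) := fun j hj =>
    not_not.mp fun h => Finset.disjoint_left.mp hT hj (hY i j h)
  rw [measureReal_inter_biInter_eq_mul hm hindep (hA i) (fun j _ => (hA j).compl) hdisj]
  gcongr
  exact hp i

end LocalLemma

section CoinFlips

variable {V : Type*}

/-- The law of a family of independent fair coin flips indexed by `V`. -/
noncomputable def fairCoins (V : Type*) : Measure (V → Bool) :=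
  Measure.infinitePi fun _ => uniformOn Set.univ

instance : IsProbabilityMeasure (fairCoins V) := by
  unfold fairCoins
  infer_instance

lemma iIndep_comap_eval_fairCoins :
    iIndep (fun v : V => MeasurableSpace.comap (Function.eval v) inferInstance) (fairCoins V) :=
  iIndepFun_infinitePi (X := fun _ b => b) fun _ => measurable_id

lemma fairCoins_real_pi_singleton (s : Finset V) (a : V → Bool) :
    (fairCoins V).real (Set.pi s fun v => {a v}) = (1 / 2) ^ s.card := by
  rw [measureReal_def, fairCoins, Measure.infinitePi_pi _ fun _ _ => measurableSet_singleton _]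
  simp only [uniformOn_univ, Measure.count_singleton, Fintype.card_bool, Finset.prod_const]
  simp

lemma measurableSet_iSup_comap_eval_pi_singleton (s : Finset V) (a : V → Bool) :
    MeasurableSet[⨆ v ∈ (s : Set V), MeasurableSpace.comap (Function.eval v) inferInstance]
      (Set.pi s fun v => {a v}) := by
  rw [Set.pi_def]
  exact @Finset.measurableSet_biInter _ _ (⨆ v ∈ (s : Set V), _) _ s fun v hv =>
    le_biSup (fun v => MeasurableSpace.comap (Function.eval v) inferInstance)
      (Finset.mem_coe.mpr hv) _ ⟨{a v}, measurableSet_singleton _, rfl⟩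

end CoinFlips

section Separated

variable {G : Type*} [Group G]

lemma mem_inv_mul_mul_of_not_disjoint {D : Set G} {g h : G} (hgh : ¬Disjoint (D * {g}) (D * {h})) :
    g ∈ D⁻¹ * D * {h} := by
  simp only [Set.mul_singleton] at hgh ⊢
  obtain ⟨_, ⟨d, hd, rfl⟩, d', hd', hdd'⟩ := Set.not_disjoint_iff.mp hgh
  refine ⟨d⁻¹ * d', Set.mul_mem_mul (Set.inv_mem_inv.mpr hd) hd', ?_⟩
  simp only [mul_assoc, hdd', inv_mul_cancel_left]

lemma DSeparated.pairwiseDisjoint_mul_right {D S : Set G} (hS : DSeparated G D S) (k : G) :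
    S.PairwiseDisjoint fun g => D * {g * k} := by
  have htranslate : ∀ g, D * {g * k} = (· * k) '' (D * {g}) := fun g => by
    rw [← Set.singleton_mul_singleton, ← mul_assoc, Set.mul_singleton (b := k)]
  intro g hg h hh hgh
  simp only [Function.onFun, htranslate]
  exact (Set.disjoint_image_iff (mul_left_injective k)).mpr (hS g hg h hh hgh)

lemma exists_dSeparated_subset_card_eq {E : Finset G} (hE : E.Nonempty) {V : Set G}
    (hV : V.Infinite) (n : ℕ) :
    ∃ F : Finset G, (F : Set G) ⊆ V ∧ F.card = n ∧ DSeparated G E F := by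
  classical
  let R : G → G → Prop := fun x y => Disjoint ((E : Set G) * {x}) (E * {y})
  have : Std.Symm R := ⟨fun _ _ h => h.symm⟩
  obtain ⟨f, hfV, hf⟩ : ∃ f : ℕ → G, (∀ n, f n ∈ V) ∧ Pairwise (Function.onFun R f) := by
    refine exists_seq_of_forall_finset_exists' (· ∈ V) R fun F _ => ?_
    obtain ⟨y, hyV, hy⟩ := hV.exists_notMem_finset (E⁻¹ * E * F)
    refine ⟨y, hyV, fun x hx => not_not.mp fun hxy => hy ?_⟩
    have hmem := mem_inv_mul_mul_of_not_disjoint fun h : Disjoint ((E : Set G) * {y}) (E * {x}) =>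
      hxy h.symm
    exact_mod_cast Set.mul_subset_mul_left (Set.singleton_subset_iff.mpr hx) hmem
  have hinj : Function.Injective f := by
    intro i j hij
    by_contra hne
    have hdisj : Disjoint ((E : Set G) * {f i}) (E * {f j}) := hf hne
    rw [hij, disjoint_self, Set.bot_eq_empty] at hdisj
    exact (hE.to_set.mul (Set.singleton_nonempty (f j))).ne_empty hdisj
  refine ⟨(Finset.range n).image f, ?_, ?_, ?_⟩
  · simpa [Set.subset_def] using fun i _ => hfV i
  · rw [Finset.card_image_of_injective _ hinj, Finset.card_range]
  · rw [Finset.coe_image]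
    rintro _ ⟨i, -, rfl⟩ _ ⟨j, -, rfl⟩ hij
    exact hf fun h => hij (congrArg f h)

section IsolatedEvents

variable [DecidableEq G]

/-- The event that, in the random subset of `G` encoded by `ω : G → Bool`, the element `g` is
present and is the only element present in `E * {g}` (for `1 ∈ E`). -/
def isolatedEvent (E : Finset G) (g : G) : Set (G → Bool) :=
  Set.pi (E * {g} : Finset G) fun v => {decide (v = g)}

lemma dSeparated_setOf_mem_isolatedEvent {D : Set G} {E : Finset G} (hE : 1 ∈ E)
    (hDE : D⁻¹ * D ⊆ E) (ω : G → Bool) : DSeparated G D {g | ω ∈ isolatedEvent E g} := by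
  intro g hg h hh hgh
  by_contra hdisj
  have hgE : g ∈ E * {g} := Finset.mem_mul.mpr ⟨1, hE, g, Finset.mem_singleton_self g, one_mul g⟩
  have hhE : g ∈ E * {h} := by
    rw [← Finset.mem_coe, Finset.coe_mul, Finset.coe_singleton]
    exact Set.mul_subset_mul_right hDE (mem_inv_mul_mul_of_not_disjoint hdisj)
  have htrue : ω g = decide (g = g) := hg g hgE
  have hfalse : ω g = decide (g = h) := hh g hhE
  simp [htrue, hgh] at hfalse

lemma measurableSet_iSup_comap_eval_isolatedEvent (E : Finset G) (g : G) :
    MeasurableSet[⨆ v ∈ (E : Set G) * {g}, MeasurableSpace.comap (Function.eval v) inferInstance]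
      (isolatedEvent E g) := by
  rw [isolatedEvent, ← Finset.coe_singleton, ← Finset.coe_mul]
  exact measurableSet_iSup_comap_eval_pi_singleton (E * ({g} : Finset G)) fun v => decide (v = g)

lemma measurableSet_isolatedEvent (E : Finset G) (g : G) : MeasurableSet (isolatedEvent E g) := by
  rw [isolatedEvent]
  exact MeasurableSet.pi (E * ({g} : Finset G)).countable_toSet fun _ _ => measurableSet_singleton _

lemma fairCoins_real_isolatedEvent (E : Finset G) (g : G) :
    (fairCoins G).real (isolatedEvent E g) = (1 / 2) ^ E.card := by
  rw [isolatedEvent, fairCoins_real_pi_singleton, Finset.card_mul_singleton]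

lemma fairCoins_real_biInter_isolatedEvent_compl {E F : Finset G} (hF : DSeparated G E F) (k : G) :
    (fairCoins G).real (⋂ f ∈ F, (isolatedEvent E (f * k))ᶜ) = (1 - (1 / 2) ^ E.card) ^ F.card := by
  rw [measureReal_biInter_eq_prod (fun v => (measurable_pi_apply v).comap_le)
    iIndep_comap_eval_fairCoins F
    (fun f _ => (measurableSet_iSup_comap_eval_isolatedEvent E (f * k)).compl)
    (hF.pairwiseDisjoint_mul_right k)]
  refine Finset.prod_eq_pow_card fun f _ => ?_
  rw [probReal_compl_eq_one_sub (measurableSet_isolatedEvent E _), fairCoins_real_isolatedEvent]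

lemma mem_inv_mul_mul_of_not_disjoint_biUnion {E F : Finset G} {i j : G}
    (h : ¬Disjoint (⋃ f ∈ F, (E : Set G) * {f * i}) (⋃ f ∈ F, (E : Set G) * {f * j})) :
    j ∈ (E * F)⁻¹ * (E * F) * {i} := by
  have hunion (k : G) :
      ⋃ f ∈ F, (E : Set G) * {f * k} = (E : Set G) * (F : Set G) * {k} := by
    simp only [← Set.singleton_mul_singleton, ← mul_assoc, ← Set.iUnion₂_mul, ← Set.mul_iUnion₂,
      ← Finset.mem_coe, Set.biUnion_of_singleton]
  rw [hunion, hunion, disjoint_comm] at h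
  simpa only [← Finset.mem_coe, Finset.coe_mul, Finset.coe_inv, Finset.coe_singleton] using
    mem_inv_mul_mul_of_not_disjoint h

lemma card_inv_mul_self_mul_singleton_le (E F : Finset G) (i : G) :
    ((E * F)⁻¹ * (E * F) * {i}).card ≤ (E.card * F.card) ^ 2 :=
  calc ((E * F)⁻¹ * (E * F) * {i}).card = ((E * F)⁻¹ * (E * F)).card :=
        Finset.card_mul_singleton _ _
    _ ≤ (E * F)⁻¹.card * (E * F).card := Finset.card_mul_le
    _ = (E * F).card ^ 2 := by rw [Finset.card_inv, sq]
    _ ≤ (E.card * F.card) ^ 2 := Nat.pow_le_pow_left Finset.card_mul_le 2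

lemma exists_forall_exists_mem_isolatedEvent {E F : Finset G} (hE : E.Nonempty) (hF : F.Nonempty)
    (hsep : DSeparated G E F)
    (hcard : 4 * ((E.card * F.card : ℝ) ^ 2) * (1 - (1 / 2) ^ E.card) ^ F.card ≤ 1)
    (K : Finset G) : ∃ ω : G → Bool, ∀ k ∈ K, ∃ f ∈ F, ω ∈ isolatedEvent E (f * k) := by
  have hpos : 0 < (fairCoins G).real (⋂ k ∈ K, (⋂ f ∈ F, (isolatedEvent E (f * k))ᶜ)ᶜ) :=
    lovasz_local_lemma (fun v => (measurable_pi_apply v).comap_le) iIndep_comap_eval_fairCoins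
      (fun k => measurableSet_biInter_of_iSup fun f _ =>
        (measurableSet_iSup_comap_eval_isolatedEvent E (f * k)).compl)
      (fun k => (fairCoins_real_biInter_isolatedEvent_compl hsep k).le)
      (fun _ _ => mem_inv_mul_mul_of_not_disjoint_biUnion) (card_inv_mul_self_mul_singleton_le E F)
      (pow_ne_zero 2 (mul_ne_zero hE.card_ne_zero hF.card_ne_zero)) (by exact_mod_cast hcard) K
  obtain ⟨ω, hω⟩ := nonempty_of_measureReal_ne_zero hpos.ne'
  exact ⟨ω, by simpa using hω⟩

end IsolatedEvents

lemma exists_ne_zero_mul_sq_mul_pow_le_one (a : ℝ) {r : ℝ} (hr0 : 0 ≤ r) (hr1 : r < 1) :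
    ∃ n : ℕ, n ≠ 0 ∧ a * (n ^ 2 * r ^ n) ≤ 1 := by
  have hlim := (tendsto_pow_const_mul_const_pow_of_lt_one 2 hr0 hr1).const_mul a
  rw [mul_zero] at hlim
  obtain ⟨n, hn, hn0⟩ :=
    ((hlim.eventually_le_const one_pos).and (Filter.eventually_ne_atTop 0)).exists
  exact ⟨n, hn0, hn⟩

theorem exists_finset_subset_forall_exists_dSeparated {D V : Set G} (hD : D.Finite)
    (hV : V.Infinite) :
    ∃ F : Finset G, (F : Set G) ⊆ V ∧
      ∀ K : Finset G, ∃ S : Set G, DSeparated G D S ∧ ∀ k ∈ K, ∃ f ∈ F, f * k ∈ S := by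
  classical
  obtain ⟨E, hE, hDE⟩ : ∃ E : Finset G, 1 ∈ E ∧ D⁻¹ * D ⊆ E :=
    ⟨insert 1 (hD.inv.mul hD).toFinset, Finset.mem_insert_self _ _, by simp⟩
  have hr : (0 : ℝ) < (1 / 2) ^ E.card := by positivity
  obtain ⟨n, hn0, hn⟩ := exists_ne_zero_mul_sq_mul_pow_le_one (4 * (E.card : ℝ) ^ 2)
    (sub_nonneg.mpr (pow_le_one₀ (by norm_num) (by norm_num))) (sub_lt_self 1 hr)
  obtain ⟨F, hFV, rfl, hF⟩ := exists_dSeparated_subset_card_eq ⟨1, hE⟩ hV n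
  refine ⟨F, hFV, fun K => ?_⟩
  obtain ⟨ω, hω⟩ := exists_forall_exists_mem_isolatedEvent ⟨1, hE⟩
    (Finset.card_ne_zero.mp hn0) hF (by convert hn using 1; ring) K
  exact ⟨_, dSeparated_setOf_mem_isolatedEvent hE hDE ω, hω⟩

end Separated

section Flows

variable {G X : Type*} [Group G] [TopologicalSpace X] [CompactSpace X] [MulAction G X]
  [ContinuousConstSMul G X]

lemma IsMinimalFlow.exists_finset_forall_smul_mem (hX : IsMinimalFlow G X) {U : Set X}
    (hU : IsOpen U) (hne : U.Nonempty) : ∃ K : Finset G, ∀ x : X, ∃ k ∈ K, k • x ∈ U := by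
  classical
  have : MulAction.IsMinimal G X := ⟨hX⟩
  obtain ⟨I, hI⟩ := isCompact_univ.exists_finite_cover_smul G hU hne
  refine ⟨I⁻¹, fun x => ?_⟩
  obtain ⟨g, hg, hx⟩ := Set.mem_iUnion₂.mp (hI (Set.mem_univ x))
  exact ⟨g⁻¹, Finset.inv_mem_inv hg, Set.mem_smul_set_iff_inv_smul_mem.mp hx⟩

lemma IsMinimalFlow.infinite_setOf_smul_mem [Infinite G] (hX : IsMinimalFlow G X) {U : Set X}
    (hU : IsOpen U) (hne : U.Nonempty) (x : X) : {g : G | g • x ∈ U}.Infinite := by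
  intro hfin
  obtain ⟨K, hK⟩ := hX.exists_finset_forall_smul_mem hU hne
  have hcover : (K : Set G)⁻¹ * {g : G | g • x ∈ U} = Set.univ := by
    refine Set.eq_univ_of_forall fun h => ?_
    obtain ⟨k, hk, hkU⟩ := hK (h • x)
    exact ⟨k⁻¹, Set.inv_mem_inv.mpr hk, k * h, by rwa [Set.mem_ofPred_eq, mul_smul],
      inv_mul_cancel_left k h⟩
  exact Set.infinite_univ (hcover ▸ K.finite_toSet.inv.mul hfin)

end Flows

theorem every_minimal_flow_has_SCP_general
    (G : Type*) [Group G] [Infinite G]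
    (X : Type*) [TopologicalSpace X] [CompactSpace X]
    [MulAction G X] [ContinuousConstSMul G X]
    (hXmin : IsMinimalFlow G X) :
    SCP G X := by
  intro D hD U hU hne
  obtain ⟨x₀, hx₀⟩ := hne
  obtain ⟨F, hFU, hF⟩ := exists_finset_subset_forall_exists_dSeparated hD
    (hXmin.infinite_setOf_smul_mem hU ⟨x₀, hx₀⟩ x₀)
  have hO : IsOpen (⋂ f ∈ F, (f • · : X → X) ⁻¹' U) :=
    isOpen_biInter_finset fun f _ => hU.preimage (continuous_const_smul f)
  obtain ⟨K, hK⟩ := hXmin.exists_finset_forall_smul_mem hO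
    ⟨x₀, Set.mem_iInter₂.mpr fun _ hf => hFU hf⟩
  obtain ⟨S, hS, hSK⟩ := hF K
  refine ⟨S, hS, fun x => ?_⟩
  obtain ⟨k, hk, hkx⟩ := hK x
  obtain ⟨f, hf, hfk⟩ := hSK k hk
  exact ⟨f * k, hfk, mul_smul f k x ▸ Set.mem_iInter₂.mp hkx f hf⟩

/-- Let `G` be an infinite discrete group. Then every minimal `G`-flow
has the separated covering property. -/
theorem every_minimal_flow_has_SCP
    (G : Type*) [Group G] [Infinite G]
    (X : Type*) [TopologicalSpace X] [CompactSpace X] [T2Space X] [Nonempty X]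
    [MulAction G X] [ContinuousConstSMul G X]
    (hXmin : IsMinimalFlow G X) :
    SCP G X :=
  every_minimal_flow_has_SCP_general G X hXmin
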